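/- arXiv:1211.6784 — 4 statements merged into one kernel-verified Lean document; each statement's English description precedes it below -/
import Mathlib

section
/- Lemma A13: In the surface singular braid monoid SSB_m, for all integers n, i with 1 ≤ i < n ≤ m and for each generator family x ∈ {a, b, c, c̄}, one has x_i · Δ_n = Δ_n · x_{n−i}, where Δ_n is the positive half-twist element on the first n strands. -/
/-!
The identity is proved by induction on `n`, using `Δ_{n+1} = Δ_n · (c_n ⋯ c_1)`.

* For `1 ≤ i < n`, sliding `x_i` through the chain `c_n ⋯ c_1` raises its index by one
  (`G_mul_chain`): far commutativity moves `x_i` past `c_n ⋯ c_{i+2}`, the mixed braid relation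
  `x_i c_{i+1} c_i = c_{i+1} c_i x_{i+1}` raises the index, and far commutativity finishes.
  With the induction hypothesis this gives `x_i Δ_{n+1} = Δ_n x_{n-i} (c_n ⋯ c_1)
  = Δ_{n+1} x_{n+1-i}`.
* The remaining index `i = n` is out of reach of the induction hypothesis. Write
  `Δ_{n+1} = Δ_{n-1} (c_{n-1} ⋯ c_1)(c_n ⋯ c_1)`; the generator `x_n` commutes with `Δ_{n-1}`
  and passes through the two chains to become `x_1` (`G_mul_chain_mul_chain`).

Only the mixed braid relation and commutation of generators whose indices do not differ by one
(equal indices included: `x_1 c_1 = c_1 x_1`) are needed.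
-/

/-- The four generator families of the surface singular braid monoid:
`a`, `b` (singular), `c` (positive crossing), `cbar` (negative crossing). -/
inductive GenKind : Type
  | a | b | c | cbar
  deriving DecidableEq

/-- Valid strand indices `1 ≤ i ≤ m - 1` for the generators of `SSB m`. -/
abbrev Idx (m : ℕ) := {i : ℕ // 1 ≤ i ∧ i < m}

/-- Generators of the surface singular braid monoid `SSB m`:
a family together with an index. -/
abbrev Gen (m : ℕ) := GenKind × Idx m

/-- The word consisting of a single generator, in the free monoid. -/
def fw {m : ℕ} (x : GenKind) (i : Idx m) : FreeMonoid (Gen m) := FreeMonoid.of (x, i)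

/-- The defining relations A1)-A12) of the surface singular braid monoid. -/
inductive SSBRel (m : ℕ) : FreeMonoid (Gen m) → FreeMonoid (Gen m) → Prop
  | A1 (i : Idx m) : SSBRel m (fw .c i * fw .cbar i) 1
  | A1' (i : Idx m) : SSBRel m (fw .cbar i * fw .c i) 1
  | A2 (x y : GenKind) (i n : Idx m) (h : (i : ℕ) + 1 ≠ (n : ℕ) ∧ (n : ℕ) + 1 ≠ (i : ℕ)) :
      SSBRel m (fw x i * fw y n) (fw y n * fw x i)
  | A3 (x : GenKind) (i k : Idx m) (h : (k : ℕ) = (i : ℕ) + 1 ∨ (i : ℕ) = (k : ℕ) + 1) :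
      SSBRel m (fw .c i * fw x k * fw .cbar i) (fw .cbar k * fw x i * fw .c k)
  | A4 (x : GenKind) (i k : Idx m) (h : (k : ℕ) = (i : ℕ) + 1 ∨ (i : ℕ) = (k : ℕ) + 1) :
      SSBRel m (fw x i * fw .c k * fw .c i) (fw .c k * fw .c i * fw x k)
  | A5 (x : GenKind) (i k : Idx m) (h : (k : ℕ) = (i : ℕ) + 1 ∨ (i : ℕ) = (k : ℕ) + 1) :
      SSBRel m (fw x i * fw .cbar k * fw .cbar i) (fw .cbar k * fw .cbar i * fw x k)
  | A6 (i k : Idx m) (h : (k : ℕ) = (i : ℕ) + 1 ∨ (i : ℕ) = (k : ℕ) + 1) :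
      SSBRel m (fw .a i * fw .b k) (fw .b k * fw .a i)
  | A7 (i j k : Idx m) (hi : 2 < (i : ℕ)) (hj : (j : ℕ) + 1 = (i : ℕ))
      (hk : (k : ℕ) + 2 = (i : ℕ)) :
      SSBRel m (fw .a i * fw .b k * (fw .c j * fw .c k * fw .c i * fw .c j) ^ 2)
        (fw .a i * fw .b k)
  | A8 (i j k : Idx m) (hi : 2 < (i : ℕ)) (hj : (j : ℕ) + 1 = (i : ℕ))
      (hk : (k : ℕ) + 2 = (i : ℕ)) :
      SSBRel m (fw .b i * fw .a k * (fw .c j * fw .c k * fw .c i * fw .c j) ^ 2)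
        (fw .b i * fw .a k)
  | A9 (i : Idx m) : SSBRel m (fw .a i * fw .a i) (fw .a i)
  | A10 (i : Idx m) : SSBRel m (fw .b i * fw .b i) (fw .b i)
  | A11 (i : Idx m) : SSBRel m (fw .a i * fw .b i * (fw .c i) ^ 2) (fw .a i * fw .b i)
  | A12 (i k p q : Idx m) (h : (k : ℕ) = (i : ℕ) + 1 ∨ (i : ℕ) = (k : ℕ) + 1)
      (hp : (p : ℕ) = min (i : ℕ) (k : ℕ)) (hq : (q : ℕ) = (p : ℕ) + 1) :
      SSBRel m (fw .a i * fw .b k * (fw .c p * fw .c q * fw .c p))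
        (fw .a i * fw .b k * (fw .cbar p * fw .cbar q * fw .cbar p))

/-- The surface singular braid monoid on `m` strands. -/
abbrev SSB (m : ℕ) := PresentedMonoid (SSBRel m)

/-- The generator `x_j` of `SSB m` (`x ∈ {a, b, c, cbar}`, `1 ≤ j ≤ m - 1`);
defined as `1` for out-of-range indices. -/
def G (m : ℕ) (x : GenKind) (j : ℕ) : SSB m :=
  if h : 1 ≤ j ∧ j < m then PresentedMonoid.of (SSBRel m) (x, ⟨j, h⟩) else 1

/-- The descending chain `c_j c_{j-1} ⋯ c_1` in `SSB m`. -/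
def chain (m : ℕ) : ℕ → SSB m
  | 0 => 1
  | j + 1 => G m .c (j + 1) * chain m j

/-- The positive half-twist `Δ_n = (c_1)(c_2 c_1)⋯(c_{n-1} c_{n-2} ⋯ c_1)` on the
first `n` strands of `SSB m`. -/
def delta (m : ℕ) : ℕ → SSB m
  | 0 => 1
  | n + 1 => delta m n * chain m n

/-- Far commutativity of the generators. It also covers equal indices, and out-of-range indices,
for which `G` is `1`. -/
lemma G_comm (m : ℕ) (x y : GenKind) (i j : ℕ) (h : i + 1 ≠ j ∧ j + 1 ≠ i) :
    G m x i * G m y j = G m y j * G m x i := by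
  by_cases hi : 1 ≤ i ∧ i < m <;> by_cases hj : 1 ≤ j ∧ j < m <;> simp only [G, hi, hj]
  · exact PresentedMonoid.mk_eq_mk_of_rel (SSBRel.A2 x y ⟨i, hi⟩ ⟨j, hj⟩ h)
  all_goals simp

/-- The mixed braid relation `x_i c_k c_i = c_k c_i x_k` for adjacent `i`, `k`, bracketed to the
right. -/
lemma G_braid (m : ℕ) (x : GenKind) (i k : ℕ) (hi : 1 ≤ i ∧ i < m) (hk : 1 ≤ k ∧ k < m)
    (h : k = i + 1 ∨ i = k + 1) :
    G m x i * (G m .c k * G m .c i) = G m .c k * (G m .c i * G m x k) := by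
  rw [← mul_assoc, ← mul_assoc]
  simp only [G, hi, hk]
  exact PresentedMonoid.mk_eq_mk_of_rel (SSBRel.A4 x ⟨i, hi⟩ ⟨k, hk⟩ h)

lemma G_comm_chain (m : ℕ) (x : GenKind) (i j : ℕ) (h : j + 1 < i) :
    G m x i * chain m j = chain m j * G m x i := by
  induction j with
  | zero => simp [chain]
  | succ j ih =>
    rw [chain, ← mul_assoc, G_comm m x .c i (j + 1) (by omega), mul_assoc, ih (by omega),
      mul_assoc]

lemma G_comm_delta (m : ℕ) (x : GenKind) (i n : ℕ) (h : n < i) :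
    G m x i * delta m n = delta m n * G m x i := by
  induction n with
  | zero => simp [delta]
  | succ n ih =>
    rw [delta, ← mul_assoc, ih (by omega), mul_assoc, G_comm_chain m x i n h, mul_assoc]

/-- Passing through the chain `c_n ⋯ c_1` from left to right raises the index by one. -/
lemma G_mul_chain (m : ℕ) (x : GenKind) (i n : ℕ) (hi : 1 ≤ i) (hin : i < n) (hn : n < m) :
    G m x i * chain m n = chain m n * G m x (i + 1) := by
  induction n with
  | zero => omega
  | succ n ih =>
    rcases Nat.lt_or_ge i n with h | h
    · rw [chain, ← mul_assoc, G_comm m x .c i (n + 1) (by omega), mul_assoc,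
        ih h (by omega), mul_assoc]
    · obtain ⟨j, rfl⟩ : ∃ j, i = j + 1 := ⟨i - 1, by omega⟩
      obtain rfl : n = j + 1 := by omega
      calc G m x (j + 1) * chain m (j + 1 + 1)
          = G m x (j + 1) * (G m .c (j + 1 + 1) * G m .c (j + 1)) * chain m j := by
            simp only [chain, mul_assoc]
        _ = G m .c (j + 1 + 1) * (G m .c (j + 1) * (G m x (j + 1 + 1) * chain m j)) := by
            rw [G_braid m x (j + 1) (j + 1 + 1) (by omega) (by omega) (by omega)]
            simp only [mul_assoc]
        _ = chain m (j + 1 + 1) * G m x (j + 1 + 1) := by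
            rw [G_comm_chain m x (j + 1 + 1) j (by omega)]
            simp only [chain, mul_assoc]

/-- The top generator passes through two consecutive chains and becomes the bottom one. The
induction rests on `(c_{n+1} ⋯ c_1)(c_{n+2} ⋯ c_1) = c_{n+1} c_{n+2} (c_n ⋯ c_1)(c_{n+1} ⋯ c_1)`. -/
lemma G_mul_chain_mul_chain (m : ℕ) (x : GenKind) (n : ℕ) (hn : n + 1 < m) :
    G m x (n + 1) * (chain m n * chain m (n + 1)) =
      chain m n * chain m (n + 1) * G m x 1 := by
  induction n with
  | zero => simpa [chain] using G_comm m x .c 1 1 (by omega)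
  | succ n ih =>
    have hsplit : chain m (n + 1) * chain m (n + 1 + 1) =
        G m .c (n + 1) * G m .c (n + 1 + 1) * (chain m n * chain m (n + 1)) := by
      calc chain m (n + 1) * chain m (n + 1 + 1)
          = G m .c (n + 1) * (chain m n * G m .c (n + 1 + 1)) * chain m (n + 1) := by
            nth_rewrite 1 [chain.eq_2 m n]
            rw [chain.eq_2 m (n + 1)]
            simp only [mul_assoc]
        _ = _ := by
            rw [← G_comm_chain m .c (n + 1 + 1) n (by omega)]
            simp only [mul_assoc]
    rw [hsplit, ← mul_assoc,
      G_braid m x (n + 1 + 1) (n + 1) (by omega) (by omega) (by omega)]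
    simp only [mul_assoc] at ih ⊢
    rw [ih (by omega)]

/-- Lemma A13: `x_i Δ_n = Δ_n x_{n-i}` for `1 ≤ i < n ≤ m`. -/
theorem relation_A13 (m n i : ℕ) (hnm : n ≤ m) (hi : 1 ≤ i) (hin : i < n) (x : GenKind) :
    G m x i * delta m n = delta m n * G m x (n - i) := by
  induction n generalizing i with
  | zero => omega
  | succ n ih =>
    rcases Nat.lt_or_ge i n with h | h
    · rw [delta, ← mul_assoc, ih i (by omega) hi h, mul_assoc,
        G_mul_chain m x (n - i) n (by omega) (by omega) (by omega), mul_assoc,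
        show n - i + 1 = n + 1 - i by omega]
    · obtain ⟨k, rfl⟩ : ∃ k, n = k + 1 := ⟨n - 1, by omega⟩
      obtain rfl : i = k + 1 := by omega
      rw [show k + 1 + 1 - (k + 1) = 1 by omega, delta, delta, mul_assoc (delta m k),
        ← mul_assoc, G_comm_delta m x (k + 1) k (by omega), mul_assoc,
        G_mul_chain_mul_chain m x k (by omega), mul_assoc (delta m k)]
end

section
/- Proposition (Przytycki), relation A14: In the surface singular braid monoid SSB_m, for all indices i, k with |k − i| = 1, one has a_i c̄_k b_i c_k Δ² = a_i c̄_k b_i c_k, where Δ = c_p c_{p+1} c_p with p = min(i, k) is the positive half-twist on the three strands involved. -/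
/-- The square of the half-twist `x y x` commutes with `x` as soon as `x` and `y` satisfy the braid
relation. -/
lemma fullTwist_commute_left {M : Type*} [Monoid M] {x y : M} (h : x * y * x = y * x * y) :
    Commute x ((x * y * x) ^ 2) := by
  have h1 : x * (x * y * x) = x * y * x * y := by
    rw [h]; simp only [← mul_assoc]; rw [h]
  have h2 : y * (x * y * x) = x * y * x * x := by
    rw [h]; simp only [mul_assoc] at h ⊢; rw [h]
  rw [Commute, SemiconjBy, sq, ← mul_assoc, h1, mul_assoc _ y, h2]
  simp only [mul_assoc]

/-- The square of the half-twist `x y x` also commutes with `y`. -/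
lemma fullTwist_commute_right {M : Type*} [Monoid M] {x y : M} (h : x * y * x = y * x * y) :
    Commute y ((x * y * x) ^ 2) := by
  rw [h]
  exact fullTwist_commute_left h.symm

/-- The relation in an arbitrary monoid: `a`, `b`, `b'` play the roles of `a_i`, `b_i`, `b_k`,
while `c`, `c'` are `c_i`, `c̄_i`, and `d`, `d'` are `c_k`, `c̄_k`; `T` is the full twist. Conjugation
by `c` replaces `b` by `b'`, next to which `T` is absorbed. -/
lemma conj_mul_fullTwist {M : Type*} [Monoid M] {a b b' c c' d d' T : M}
    (hc : c * c' = 1) (hc' : c' * c = 1) (hac : a * c = c * a)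
    (h3 : c * b' * c' = d' * b * d) (hT : Commute c T) (h12 : a * b' * T = a * b') :
    a * d' * b * d * T = a * d' * b * d := by
  have hT' : c' * T = T * c' := by
    calc c' * T = c' * (T * c) * c' := by simp only [mul_assoc, hc, mul_one]
      _ = T * c' := by rw [← hT.eq, ← mul_assoc c', hc', one_mul]
  have h : a * d' * b * d = c * (a * b') * c' := by
    calc a * d' * b * d = a * (d' * b * d) := by simp only [mul_assoc]
      _ = a * c * b' * c' := by rw [← h3]; simp only [mul_assoc]
      _ = c * (a * b') * c' := by rw [hac]; simp only [mul_assoc]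
  rw [h, mul_assoc, hT', ← mul_assoc, mul_assoc c, h12]

lemma G_eq_mk {m : ℕ} (x : GenKind) (j : Idx m) :
    G m x j = PresentedMonoid.mk (SSBRel m) (fw x j) := dif_pos j.2

lemma SSBRel.mk_eq {m : ℕ} {u v : FreeMonoid (Gen m)} (h : SSBRel m u v) :
    PresentedMonoid.mk (SSBRel m) u = PresentedMonoid.mk (SSBRel m) v :=
  PresentedMonoid.mk_eq_mk_of_rel h

/-- Relation A14 (Przytycki): `a_i c̄_k b_i c_k Δ² = a_i c̄_k b_i c_k`, where
`Δ = c_p c_{p+1} c_p` with `p = min i k`, for `|k - i| = 1`. -/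
theorem relation_A14 (m i k : ℕ) (hi : 1 ≤ i ∧ i < m) (hk : 1 ≤ k ∧ k < m)
    (hik : k = i + 1 ∨ i = k + 1) :
    G m .a i * G m .cbar k * G m .b i * G m .c k *
        (G m .c (min i k) * G m .c (min i k + 1) * G m .c (min i k)) ^ 2 =
      G m .a i * G m .cbar k * G m .b i * G m .c k := by
  obtain ⟨I, rfl⟩ : ∃ I : Idx m, (I : ℕ) = i := ⟨⟨i, hi⟩, rfl⟩
  obtain ⟨K, rfl⟩ : ∃ K : Idx m, (K : ℕ) = k := ⟨⟨k, hk⟩, rfl⟩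
  obtain ⟨P, hP⟩ : ∃ P : Idx m, (P : ℕ) = min (I : ℕ) K := ⟨⟨min (I : ℕ) K, by omega⟩, rfl⟩
  obtain ⟨Q, hQ⟩ : ∃ Q : Idx m, (Q : ℕ) = P + 1 := ⟨⟨P + 1, by omega⟩, rfl⟩
  have hinv (j : Idx m) : G m .cbar j * G m .c j = 1 := by
    simpa [G_eq_mk] using (SSBRel.A1' j).mk_eq
  have hbraid : G m .c P * G m .c Q * G m .c P = G m .c Q * G m .c P * G m .c Q := by
    simpa [G_eq_mk] using (SSBRel.A4 .c P Q (Or.inl hQ)).mk_eq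
  rw [← hP, ← hQ]
  refine conj_mul_fullTwist (b' := G m .b K) (c := G m .c I) (c' := G m .cbar I)
    ?_ (hinv I) ?_ ?_ ?_ ?_
  · simpa [G_eq_mk] using (SSBRel.A1 I).mk_eq
  · simpa [G_eq_mk] using (SSBRel.A2 .a .c I I (by omega)).mk_eq
  · simpa [G_eq_mk] using (SSBRel.A3 .b I K hik).mk_eq
  · obtain h | h : I = P ∨ I = Q := by
      rw [Subtype.ext_iff, Subtype.ext_iff]; omega
    · rw [h]; exact fullTwist_commute_left hbraid
    · rw [h]; exact fullTwist_commute_right hbraid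
  · have h12 : G m .a I * G m .b K * (G m .c P * G m .c Q * G m .c P) =
        G m .a I * G m .b K * (G m .cbar P * G m .cbar Q * G m .cbar P) := by
      simpa [G_eq_mk] using (SSBRel.A12 I K P Q hik hP hQ).mk_eq
    have hΔ : G m .cbar P * G m .cbar Q * G m .cbar P * (G m .c P * G m .c Q * G m .c P) = 1 := by
      calc _ = G m .cbar P * (G m .cbar Q * (G m .cbar P * G m .c P) * G m .c Q) * G m .c P := by
            simp only [mul_assoc]
        _ = 1 := by rw [hinv P, mul_one, hinv Q, mul_one, hinv P]
    rw [sq, ← mul_assoc, h12, mul_assoc, hΔ, mul_one]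
end

section
/- In the surface singular braid monoid SSB_m, for every n with 2 ≤ n ≤ m, the square of the half-twist Δ_n² commutes with every generator x_i with 1 ≤ i < n and x ∈ {a, b, c, c̄}: x_i Δ_n² = Δ_n² x_i. (This follows by applying relation A13 twice; it is the algebraic fact used in the paper's proof that τⁿ(K) = (τ⁻ⁿ(K))*.) -/
/-- Far commutativity `SSBRel.A2` (which covers equal indices). Out-of-range indices are harmless, since
`G` is `1` there. -/
lemma gen_commute (m : ℕ) (x y : GenKind) (i k : ℕ) (h : i + 1 ≠ k ∧ k + 1 ≠ i) :
    Commute (G m x i) (G m y k) := by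
  unfold G
  split_ifs with hi hk
  · exact PresentedMonoid.mk_eq_mk_of_rel (SSBRel.A2 x y ⟨i, hi⟩ ⟨k, hk⟩ h)
  · exact Commute.one_right _
  · exact Commute.one_left _
  · exact Commute.one_left _

/-- The relation `SSBRel.A4` in `SSB m`. -/
lemma gen_mul_c_mul_c (m : ℕ) (x : GenKind) (i k : ℕ) (hi : 1 ≤ i ∧ i < m) (hk : 1 ≤ k ∧ k < m)
    (h : k = i + 1 ∨ i = k + 1) :
    G m x i * G m .c k * G m .c i = G m .c k * G m .c i * G m x k := by
  unfold G
  rw [dif_pos hi, dif_pos hk, dif_pos hi, dif_pos hk]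
  exact PresentedMonoid.mk_eq_mk_of_rel (SSBRel.A4 x ⟨i, hi⟩ ⟨k, hk⟩ h)

lemma gen_commute_chain (m : ℕ) (x : GenKind) (j n : ℕ) (h : n + 1 < j) :
    Commute (G m x j) (chain m n) := by
  induction n with
  | zero => exact Commute.one_right _
  | succ n ih =>
    exact (gen_commute m x .c j (n + 1) (by omega)).mul_right (ih (by omega))

lemma gen_commute_delta (m : ℕ) (x : GenKind) (j n : ℕ) (h : n < j) :
    Commute (G m x j) (delta m n) := by
  induction n with
  | zero => exact Commute.one_right _
  | succ n ih =>
    exact (ih (by omega)).mul_right (gen_commute_chain m x j n h)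

/-- Crossing the descending chain `c_n ⋯ c_1` raises the index of a generator by one. -/
lemma gen_mul_chain (m : ℕ) (x : GenKind) (j n : ℕ) (hj : 1 ≤ j) (hjn : j < n) (hnm : n < m) :
    G m x j * chain m n = chain m n * G m x (j + 1) := by
  induction n with
  | zero => omega
  | succ n ih =>
    rcases Nat.lt_succ_iff_lt_or_eq.mp hjn with h | rfl
    · calc G m x j * (G m .c (n + 1) * chain m n)
          = G m .c (n + 1) * (G m x j * chain m n) := by
            rw [← mul_assoc, (gen_commute m x .c j (n + 1) (by omega)).eq, mul_assoc]
        _ = G m .c (n + 1) * chain m n * G m x (j + 1) := by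
            rw [ih h (by omega), mul_assoc]
    · obtain ⟨k, rfl⟩ : ∃ k, j = k + 1 := ⟨j - 1, by omega⟩
      calc G m x (k + 1) * (G m .c (k + 1 + 1) * (G m .c (k + 1) * chain m k))
          = (G m x (k + 1) * G m .c (k + 1 + 1) * G m .c (k + 1)) * chain m k := by
            simp only [mul_assoc]
        _ = G m .c (k + 1 + 1) * G m .c (k + 1) * (G m x (k + 1 + 1) * chain m k) := by
            rw [gen_mul_c_mul_c m x (k + 1) (k + 1 + 1) (by omega) (by omega) (by omega),
              mul_assoc]
        _ = G m .c (k + 1 + 1) * (G m .c (k + 1) * chain m k) * G m x (k + 1 + 1) := by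
            rw [(gen_commute_chain m x (k + 1 + 1) k (by omega)).eq]
            simp only [mul_assoc]

/-- The ascending chain `c_1 c_2 ⋯ c_j` in `SSB m`. -/
def ascChain (m : ℕ) : ℕ → SSB m
  | 0 => 1
  | j + 1 => ascChain m j * G m .c (j + 1)

lemma gen_commute_ascChain (m : ℕ) (x : GenKind) (j n : ℕ) (h : n + 1 < j) :
    Commute (G m x j) (ascChain m n) := by
  induction n with
  | zero => exact Commute.one_right _
  | succ n ih =>
    exact (ih (by omega)).mul_right (gen_commute m x .c j (n + 1) (by omega))

/-- Crossing the ascending chain `c_1 ⋯ c_{k+2}` lowers the index of the generator `x_{k+2}`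
by one. -/
lemma gen_mul_ascChain (m : ℕ) (x : GenKind) (k : ℕ) (hk : k + 2 < m) :
    G m x (k + 2) * ascChain m (k + 2) = ascChain m (k + 2) * G m x (k + 1) := by
  calc G m x (k + 2) * (ascChain m k * G m .c (k + 1) * G m .c (k + 2))
      = ascChain m k * (G m x (k + 2) * G m .c (k + 1) * G m .c (k + 2)) := by
        rw [← mul_assoc, ← mul_assoc,
          (gen_commute_ascChain m x (k + 2) k (by omega)).eq]
        simp only [mul_assoc]
    _ = ascChain m k * G m .c (k + 1) * G m .c (k + 2) * G m x (k + 1) := by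
        rw [gen_mul_c_mul_c m x (k + 2) (k + 1) (by omega) (by omega) (by omega)]
        simp only [mul_assoc]

/-- The half-twist also factors with an ascending chain on the left:
`Δ_{n+1} = (c_1 ⋯ c_n) Δ_n`. -/
lemma delta_succ_eq (m n : ℕ) : delta m (n + 1) = ascChain m n * delta m n := by
  induction n with
  | zero => rfl
  | succ n ih =>
    calc delta m (n + 1) * chain m (n + 1)
        = ascChain m n * (delta m n * G m .c (n + 1)) * chain m n := by
          rw [ih, chain]
          simp only [mul_assoc]
      _ = ascChain m n * G m .c (n + 1) * (delta m n * chain m n) := by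
          rw [← (gen_commute_delta m .c (n + 1) n (by omega)).eq]
          simp only [mul_assoc]

/-- The half-twist reverses the strands: `x_i Δ_n = Δ_n x_{n-i}`. -/
lemma gen_mul_delta (m n : ℕ) (hnm : n ≤ m) (i : ℕ) (hi : 1 ≤ i) (hin : i < n) (x : GenKind) :
    G m x i * delta m n = delta m n * G m x (n - i) := by
  induction n generalizing i with
  | zero => omega
  | succ n ih =>
    rcases Nat.lt_succ_iff_lt_or_eq.mp hin with h | rfl
    · rw [delta, ← mul_assoc, ih (by omega) i hi h, mul_assoc,
        gen_mul_chain m x (n - i) n (by omega) (by omega) (by omega), ← mul_assoc,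
        show n - i + 1 = n + 1 - i by omega]
    · rw [Nat.add_sub_cancel_left]
      rcases Nat.lt_or_ge 1 i with h1 | h1
      · obtain ⟨k, rfl⟩ : ∃ k, i = k + 2 := ⟨i - 2, by omega⟩
        rw [delta_succ_eq, ← mul_assoc, gen_mul_ascChain m x k (by omega), mul_assoc,
          ih (by omega) (k + 1) (by omega) (by omega), ← mul_assoc,
          show k + 2 - (k + 1) = 1 by omega]
      · obtain rfl : i = 1 := by omega
        -- Here `Δ_2 = c_1`, which commutes with `x_1` by far commutativity at equal indices.
        have hd : delta m 2 = G m .c 1 := by simp [delta, chain]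
        exact hd ▸ (gen_commute m x .c 1 1 (by omega)).eq

/-- The square of the half-twist `Δ_n²` commutes with every generator `x_i`
with `1 ≤ i < n`, for `2 ≤ n ≤ m`. -/
theorem delta_sq_central (m n : ℕ) (hn : 2 ≤ n) (hnm : n ≤ m) (i : ℕ) (hi : 1 ≤ i)
    (hin : i < n) (x : GenKind) :
    G m x i * (delta m n) ^ 2 = (delta m n) ^ 2 * G m x i := by
  rw [pow_two, ← mul_assoc, gen_mul_delta m n hnm i hi hin x, mul_assoc,
    gen_mul_delta m n hnm (n - i) (by omega) (by omega) x, mul_assoc,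
    show n - (n - i) = i by omega]
end

section
/- In the surface singular braid monoid SSB_2 (generators a_1, b_1, c_1, c̄_1), for every natural number s: a_1 b_1 c_1^{2s} = a_1 b_1, a_1 b_1 c_1^{2s+1} = a_1 b_1 c_1, a_1 b_1 c̄_1^{2s} = a_1 b_1, and a_1 b_1 c̄_1^{2s+1} = a_1 b_1 c_1. (These reductions, following from relations A11 and A1, are the key step in the paper's classification of knotted surfaces of singular braid index at most two.) -/
theorem mul_pow_two_mul_of_mul_sq {M : Type*} [Monoid M] {d c : M} (h : d * c ^ 2 = d) (s : ℕ) :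
    d * c ^ (2 * s) = d := by
  induction s with
  | zero => simp
  | succ k ih => rw [Nat.mul_succ, pow_add, ← mul_assoc, ih, h]

theorem mul_rightInv_eq_of_mul_sq {M : Type*} [Monoid M] {d c e : M} (h : d * c ^ 2 = d)
    (hce : c * e = 1) : d * e = d * c := by
  conv_lhs => rw [← h]
  rw [pow_two, mul_assoc, mul_assoc, hce, mul_one]

theorem G_two_c_mul_cbar : G 2 .c 1 * G 2 .cbar 1 = 1 :=
  PresentedMonoid.mk_eq_mk_of_rel (SSBRel.A1 ⟨1, by decide⟩)

theorem G_two_ab_mul_c_sq :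
    G 2 .a 1 * G 2 .b 1 * G 2 .c 1 ^ 2 = G 2 .a 1 * G 2 .b 1 :=
  PresentedMonoid.mk_eq_mk_of_rel (SSBRel.A11 ⟨1, by decide⟩)

/-- Reductions in `SSB 2`: `a₁ b₁ c₁^(2s) = a₁ b₁`, `a₁ b₁ c₁^(2s+1) = a₁ b₁ c₁`,
`a₁ b₁ c̄₁^(2s) = a₁ b₁` and `a₁ b₁ c̄₁^(2s+1) = a₁ b₁ c₁`. -/
theorem SSB_two_ab_pow (s : ℕ) :
    G 2 .a 1 * G 2 .b 1 * (G 2 .c 1) ^ (2 * s) = G 2 .a 1 * G 2 .b 1 ∧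
    G 2 .a 1 * G 2 .b 1 * (G 2 .c 1) ^ (2 * s + 1) = G 2 .a 1 * G 2 .b 1 * G 2 .c 1 ∧
    G 2 .a 1 * G 2 .b 1 * (G 2 .cbar 1) ^ (2 * s) = G 2 .a 1 * G 2 .b 1 ∧
    G 2 .a 1 * G 2 .b 1 * (G 2 .cbar 1) ^ (2 * s + 1) = G 2 .a 1 * G 2 .b 1 * G 2 .c 1 := by
  have hc := G_two_ab_mul_c_sq
  have hbar := mul_rightInv_eq_of_mul_sq hc G_two_c_mul_cbar
  have hsq : G 2 .a 1 * G 2 .b 1 * G 2 .cbar 1 ^ 2 = G 2 .a 1 * G 2 .b 1 := by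
    rw [pow_two, ← mul_assoc, hbar, mul_assoc _ (G 2 .c 1), G_two_c_mul_cbar, mul_one]
  refine ⟨mul_pow_two_mul_of_mul_sq hc s, ?_, mul_pow_two_mul_of_mul_sq hsq s, ?_⟩
  · rw [pow_succ, ← mul_assoc, mul_pow_two_mul_of_mul_sq hc]
  · rw [pow_succ, ← mul_assoc, mul_pow_two_mul_of_mul_sq hsq, hbar]
end
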